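/- A DCTRS R is U-WLL if and only if the TRS SR(R) is WLL (i.e., for every rule l → r of SR(R) and every variable x ∈ Var(r), x occurs exactly once in l). -/

import Mathlib

set_option autoImplicit false

/-- First-order terms over a signature `F` and variables `V`. -/
inductive Term (F : Type) (V : Type) : Type where
  | var : V → Term F V
  | app : F → List (Term F V) → Term F V

namespace Term

variable {F V G W : Type}

/-- Application of a substitution. -/
def subst (σ : V → Term F W) : Term F V → Term F W
  | .var x => σ x
  | .app f ts => .app f (ts.attach.map (fun ⟨t, _⟩ => subst σ t))

/-- Renaming of variables. -/
def rename (g : V → W) (t : Term F V) : Term F W := t.subst (fun x => .var (g x))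

/-- Mapping of function symbols. -/
def mapF (g : F → G) : Term F V → Term G V
  | .var x => .var x
  | .app f ts => .app (g f) (ts.attach.map (fun ⟨t, _⟩ => mapF g t))

/-- Number of occurrences of the variable `x` in a term. -/
def count [DecidableEq V] (x : V) : Term F V → ℕ
  | .var y => if y = x then 1 else 0
  | .app _ ts => (ts.attach.map (fun ⟨t, _⟩ => count x t)).sum

/-- The list of variables occurring in a term (with repetitions). -/
def varList : Term F V → List V
  | .var x => [x]
  | .app _ ts => ts.attach.flatMap (fun ⟨t, _⟩ => varList t)

/-- A term is linear if every variable occurs at most once in it. -/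
def Linear [DecidableEq V] (t : Term F V) : Prop := ∀ x : V, t.count x ≤ 1

/-- Well-formedness of a term with respect to an arity assignment. -/
inductive WF (ar : F → ℕ) : Term F V → Prop where
  | var (x : V) : WF ar (.var x)
  | app (f : F) (ts : List (Term F V)) :
      ts.length = ar f → (∀ t ∈ ts, WF ar t) → WF ar (.app f ts)

end Term

/-- Number of occurrences of `x` in a sequence of terms. -/
def seqCount {F V : Type} [DecidableEq V] (x : V) (ts : List (Term F V)) : ℕ :=
  (ts.map (Term.count x)).sum

/-- An oriented conditional rewrite rule `l → r ⇐ s1 ≈ t1, …, sk ≈ tk`. -/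
structure CRule (F V : Type) : Type where
  lhs : Term F V
  rhs : Term F V
  conds : List (Term F V × Term F V)

/-- A conditional term rewriting system: a set of conditional rules. -/
abbrev CTRS (F V : Type) := Set (CRule F V)

namespace CRule

variable {F V W : Type}

/-- The sequence `l, t1, …, tk` of "pattern" terms of a rule. -/
def pats (ρ : CRule F V) : List (Term F V) := ρ.lhs :: ρ.conds.map Prod.snd

/-- The sequence `r, s1, …, sk` of "source" terms of a rule. -/
def srcs (ρ : CRule F V) : List (Term F V) := ρ.rhs :: ρ.conds.map Prod.fst

/-- Weak left-linearity: `|l,t1,…,tk|_x = 1` for every `x ∈ Var(r,s1,…,sk)`. -/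
def WLL [DecidableEq V] (ρ : CRule F V) : Prop :=
  ∀ x : V, 0 < seqCount x ρ.srcs → seqCount x ρ.pats = 1

/-- Determinism: `Var(si) ⊆ Var(l, t1, …, t_{i−1})`. -/
def Det [DecidableEq V] (ρ : CRule F V) : Prop :=
  ∀ i : ℕ, ∀ h : i < ρ.conds.length, ∀ x : V,
    0 < Term.count x (ρ.conds.get ⟨i, h⟩).1 →
    0 < seqCount x (ρ.lhs :: (ρ.conds.take i).map Prod.snd)

/-- Type 3: `Var(r) ⊆ Var(l, s1, t1, …, sk, tk)`. -/
def Type3 [DecidableEq V] (ρ : CRule F V) : Prop :=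
  ∀ x : V, 0 < Term.count x ρ.rhs →
    0 < seqCount x (ρ.lhs :: ρ.conds.flatMap (fun c => [c.1, c.2]))

/-- The left-hand side is a non-variable term. -/
def LhsNonVar (ρ : CRule F V) : Prop := ∀ x : V, ρ.lhs ≠ .var x

/-- Renaming the variables of a rule. -/
def mapV (g : V → W) (ρ : CRule F V) : CRule F W :=
  ⟨ρ.lhs.rename g, ρ.rhs.rename g, ρ.conds.map (fun c => (c.1.rename g, c.2.rename g))⟩

end CRule

/-- `R` is a deterministic CTRS (of Type 3, left-hand sides non-variable). -/
def IsDCTRS {F V : Type} [DecidableEq V] (R : CTRS F V) : Prop :=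
  ∀ ρ ∈ R, ρ.Det ∧ ρ.Type3 ∧ ρ.LhsNonVar

/-- All rules of `R` are weakly left-linear. -/
def IsWLL {F V : Type} [DecidableEq V] (R : CTRS F V) : Prop := ∀ ρ ∈ R, ρ.WLL

/-- Closure of a relation under contexts (rewriting below the root). -/
inductive CtxStep {F V : Type} (root : Term F V → Term F V → Prop) :
    Term F V → Term F V → Prop where
  | root {s t : Term F V} : root s t → CtxStep root s t
  | congr {f : F} {pre post : List (Term F V)} {s t : Term F V} :
      CtxStep root s t →
      CtxStep root (.app f (pre ++ s :: post)) (.app f (pre ++ t :: post))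

/-- A root rewrite step using a rule of `R`, conditions evaluated with `prev`. -/
def RootStep {F V : Type} (R : CTRS F V) (prev : Term F V → Term F V → Prop)
    (s t : Term F V) : Prop :=
  ∃ ρ ∈ R, ∃ σ : V → Term F V,
    s = ρ.lhs.subst σ ∧ t = ρ.rhs.subst σ ∧
    ∀ c ∈ ρ.conds, Relation.ReflTransGen prev (c.1.subst σ) (c.2.subst σ)

/-- The level-stratified reduction relation `→_{(n),R}`. -/
def LevelStep {F V : Type} (R : CTRS F V) : ℕ → Term F V → Term F V → Prop
  | 0 => fun _ _ => False
  | n + 1 => CtxStep (RootStep R (LevelStep R n))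

/-- The reduction relation `→_R = ⋃_{n} →_{(n),R}`. -/
def Red {F V : Type} (R : CTRS F V) (s t : Term F V) : Prop :=
  ∃ n : ℕ, LevelStep R n s t

/-- Many-step reduction `→*_R`. -/
def RedStar {F V : Type} (R : CTRS F V) : Term F V → Term F V → Prop :=
  Relation.ReflTransGen (Red R)

/-- `n`-fold composition of a relation. -/
def NFold {α : Type} (r : α → α → Prop) : ℕ → α → α → Prop
  | 0 => fun a b => a = b
  | n + 1 => fun a c => ∃ b, r a b ∧ NFold r n b c

/-- One-hole contexts. -/
inductive Ctx (F V : Type) : Type where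
  | hole : Ctx F V
  | app : F → List (Term F V) → Ctx F V → List (Term F V) → Ctx F V

/-- Filling the hole of a context with a term. -/
def Ctx.fill {F V : Type} : Ctx F V → Term F V → Term F V
  | .hole, t => t
  | .app f pre C post, t => .app f (pre ++ C.fill t :: post)
/-- Signature extended with the fresh symbols `U^ρ_i`. -/
abbrev UF (F V : Type) := F ⊕ (CRule F V × ℕ)

/-- Embedding of terms over `F` into terms over the extended signature `U_R(F)`. -/
def liftF {F V : Type} (t : Term F V) : Term (UF F V) V := t.mapF Sum.inl

/-- The list `X⃗_i` enumerating `Var(l, t1, …, t_{i−1})` in a fixed order. -/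
def Xlist {F V : Type} [DecidableEq V] (ρ : CRule F V) (i : ℕ) : List V :=
  (ρ.lhs.varList ++ ((ρ.conds.take (i - 1)).map Prod.snd).flatMap Term.varList).dedup

/-- A dummy condition (used as a default, never relevant). -/
def dummyCond {F V : Type} (ρ : CRule F V) : Term F V × Term F V := (ρ.lhs, ρ.lhs)

/-- The term `U^ρ_i(t, X⃗_i)`. -/
def uterm {F V : Type} [DecidableEq V] (ρ : CRule F V) (i : ℕ) (t : Term F V) :
    Term (UF F V) V :=
  .app (Sum.inr (ρ, i)) (liftF t :: (Xlist ρ i).map Term.var)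

/-- Left-hand side of the `j`-th unraveled rule of `ρ` (j = 0, …, k). -/
def ulhs {F V : Type} [DecidableEq V] (ρ : CRule F V) (j : ℕ) : Term (UF F V) V :=
  if j = 0 then liftF ρ.lhs
  else uterm ρ j (ρ.conds.getD (j - 1) (dummyCond ρ)).2

/-- Right-hand side of the `j`-th unraveled rule of `ρ` (j = 0, …, k). -/
def urhs {F V : Type} [DecidableEq V] (ρ : CRule F V) (j : ℕ) : Term (UF F V) V :=
  if j = ρ.conds.length then liftF ρ.rhs
  else uterm ρ (j + 1) (ρ.conds.getD j (dummyCond ρ)).1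

/-- The unconditional rules `U(ρ)` obtained by unraveling the rule `ρ`. -/
def URules {F V : Type} [DecidableEq V] (ρ : CRule F V) : Set (CRule (UF F V) V) :=
  { r | ∃ j ≤ ρ.conds.length, r = ⟨ulhs ρ j, urhs ρ j, []⟩ }

/-- The simultaneous unraveling `U(R)` of a DCTRS `R`. -/
def USys {F V : Type} [DecidableEq V] (R : CTRS F V) : CTRS (UF F V) V :=
  ⋃ ρ ∈ R, URules ρ

/-- `R` is ultra-WLL (`U`-WLL): every rule of `U(R)` is WLL. -/
def IsUWLL {F V : Type} [DecidableEq V] (R : CTRS F V) : Prop :=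
  ∀ r ∈ USys R, r.WLL
/-- Variables used for terms over the extended signature `F̄`: original
variables plus a countable supply of fresh variables. -/
abbrev WVar (V : Type) := V ⊕ ℕ

/-- The extended signature `F̄` of the SR transformation: the original symbols
(`c̄` for constructors, `f̄` for defined symbols, with extra arguments appended),
the fresh constant `⊥`, the fresh unary symbol `⟨·⟩`, and the fresh tuple
symbols `[ ]^ρ_j`. -/
inductive SSym (F V : Type) : Type where
  | orig : F → SSym F V
  | bot : SSym F V
  | guard : SSym F V
  | tup : CRule F V → ℕ → SSym F V

/-- Terms over the extended signature `F̄`. -/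
abbrev STerm (F V : Type) := Term (SSym F V) (WVar V)

/-- The fresh constant `⊥`. -/
def botT {F V : Type} : STerm F V := .app .bot []

/-- The fresh unary symbol `⟨·⟩`. -/
def guardT {F V : Type} (t : STerm F V) : STerm F V := .app .guard [t]

/-- `t̄`: the embedding of `t ∈ T(F,V)` into `T(F̄,V)` in which all the extra
arguments of defined symbols are filled with `⊥`.  Here `mOf f` is the number
of conditional `f`-rules (0 for constructors). -/
def barT {F V : Type} (mOf : F → ℕ) : Term F V → STerm F V
  | .var x => .var (Sum.inl x)
  | .app f ts =>
      .app (.orig f)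
        ((ts.attach.map (fun ⟨t, _⟩ => barT mOf t)) ++ List.replicate (mOf f) botT)

mutual
/-- `ext(t)`: the embedding of `t ∈ T(F,V)` into `T(F̄,V)` in which the extra
arguments of defined symbols are filled with distinct fresh variables; a
counter is threaded through to keep the fresh variables distinct. -/
def extT {F V : Type} (mOf : F → ℕ) : Term F V → ℕ → STerm F V × ℕ
  | .var x, c => (.var (Sum.inl x), c)
  | .app f ts, c =>
      let p := extTList mOf ts c
      (.app (.orig f)
         (p.1 ++ (List.range (mOf f)).map (fun k => .var (Sum.inr (p.2 + k)))),
       p.2 + mOf f)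

/-- `ext` on lists of terms, threading the fresh-variable counter. -/
def extTList {F V : Type} (mOf : F → ℕ) : List (Term F V) → ℕ → List (STerm F V) × ℕ
  | [], c => ([], c)
  | t :: ts, c =>
      let p := extT mOf t c
      let q := extTList mOf ts p.2
      (p.1 :: q.1, q.2)
end

/-- The backtranslation `t̂`: the partial mapping erasing `⟨·⟩` and the extra
arguments of defined symbols, recovering a term over `F`. -/
def hatT {F V : Type} (ar : F → ℕ) : STerm F V → Option (Term F V)
  | .var (Sum.inl x) => some (.var x)
  | .var (Sum.inr _) => none
  | .app (.orig f) ts =>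
      Option.map (Term.app f)
        ((ts.take (ar f)).attach.mapM (fun t => hatT ar t.1))
  | .app .guard [t] => hatT ar t
  | .app _ _ => none
decreasing_by
  · have h1 : t.1 ∈ ts := List.mem_of_mem_take t.2
    have := List.sizeOf_lt_of_mem h1
    simp only [Term.app.sizeOf_spec]
    omega
  · simp
    omega

/-- Embedding of `T(F,V)` into the terms over the unraveling signature
`U_R(F)` with extended variables. -/
def liftUV {F V : Type} (t : Term F V) : Term (UF F V) (WVar V) :=
  (t.mapF Sum.inl).rename Sum.inl
/-- The list `V⃗_j` enumerating `Var(t1, …, t_{j−1})` in a fixed order. -/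
def Vlist {F V : Type} [DecidableEq V] (ρ : CRule F V) (j : ℕ) : List V :=
  (((ρ.conds.take (j - 1)).map Prod.snd).flatMap Term.varList).dedup

/-- The term `[⟨inner⟩, V⃗_j]^ρ_j` (used in the rewrite rules of `SR(R)`). -/
def tupT {F V : Type} [DecidableEq V] (ρ : CRule F V) (j : ℕ) (inner : STerm F V) :
    STerm F V :=
  .app (.tup ρ j) (guardT inner :: (Vlist ρ j).map (fun v => .var (Sum.inl v)))

/-- The `j`-th unconditional rule (j = 0, …, k) obtained by the SR
transformation from the `i`-th conditional `f`-rule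
`ρ : f(w1,…,wn) → r ⇐ s1 ≈ t1, …, sk ≈ tk` (where `i = idx ρ`). -/
def condSRRule {F V : Type} [DecidableEq V] (mOf : F → ℕ) (idx : CRule F V → ℕ)
    (ρ : CRule F V) (j : ℕ) : CRule (SSym F V) (WVar V) :=
  match ρ.lhs with
  | .var _ => ⟨barT mOf ρ.lhs, barT mOf ρ.rhs, []⟩  -- irrelevant (lhs is never a variable)
  | .app f ws =>
    let i := idx ρ
    let m := mOf f
    let p := extTList mOf ws 0
    let ws' := p.1
    let c0 := p.2
    let slot : STerm F V → List (STerm F V) := fun mid =>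
      (List.range m).map (fun q => if q = i - 1 then mid else .var (Sum.inr (c0 + q)))
    let k := ρ.conds.length
    ⟨(if j = 0 then
        Term.app (SSym.orig f) (ws' ++ slot botT)
      else
        Term.app (SSym.orig f)
          (ws' ++ slot (tupT ρ j (extT mOf (ρ.conds.getD (j - 1) (dummyCond ρ)).2 (c0 + m)).1))),
     (if j = k then
        guardT (barT mOf ρ.rhs)
      else
        Term.app (SSym.orig f)
          (ws' ++ slot (tupT ρ (j + 1) (barT mOf (ρ.conds.getD j (dummyCond ρ)).1)))),
     []⟩

/-- The unconditional rule `ext(l) → ⟨r̄⟩` obtained by the SR transformation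
from an unconditional rule `l → r`. -/
def uncondSRRule {F V : Type} (mOf : F → ℕ) (ρ : CRule F V) : CRule (SSym F V) (WVar V) :=
  ⟨(extT mOf ρ.lhs 0).1, guardT (barT mOf ρ.rhs), []⟩

/-- The auxiliary rule `⟨⟨x⟩⟩ → ⟨x⟩`. -/
def auxGuard {F V : Type} : CRule (SSym F V) (WVar V) :=
  ⟨guardT (guardT (.var (Sum.inr 0))), guardT (.var (Sum.inr 0)), []⟩

/-- The auxiliary rule shifting `⟨·⟩` upward over the `i`-th argument of the
symbol `f` (and resetting the extra arguments of defined symbols):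
`f̄(x1,…,⟨xi⟩,…,xn, z1,…,zm) → ⟨f̄(x1,…,xn, ⊥,…,⊥)⟩`. -/
def auxShift {F V : Type} (ar mOf : F → ℕ) (f : F) (i : ℕ) : CRule (SSym F V) (WVar V) :=
  ⟨Term.app (SSym.orig f)
     (((List.range (ar f)).map
         (fun q => if q = i then guardT (.var (Sum.inr q)) else .var (Sum.inr q))) ++
      (List.range (mOf f)).map (fun q => .var (Sum.inr (ar f + q)))),
   guardT (Term.app (SSym.orig f)
     (((List.range (ar f)).map (fun q => Term.var (Sum.inr q))) ++
      List.replicate (mOf f) botT)),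
   []⟩

/-- The SR transformation `SR(R)`: the unconditional TRS over `F̄` consisting of
the transformed rules of `R` together with the auxiliary rules `R_aux`. -/
def SRSys {F V : Type} [DecidableEq V] (R : CTRS F V) (ar mOf : F → ℕ)
    (idx : CRule F V → ℕ) : CTRS (SSym F V) (WVar V) :=
  { r | (∃ ρ ∈ R, ρ.conds = [] ∧ r = uncondSRRule mOf ρ) ∨
        (∃ ρ ∈ R, ρ.conds ≠ [] ∧ ∃ j ≤ ρ.conds.length, r = condSRRule mOf idx ρ j) ∨
        r = auxGuard ∨
        (∃ (f : F) (i : ℕ), i < ar f ∧ r = auxShift ar mOf f i) }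

/-- Well-formedness of the data `(ar, mOf, idx)` describing the signature `F`
(with arities `ar`), the number `mOf f` of conditional `f`-rules of `R`, and
the ranking `idx` of the conditional rules of each defined symbol by some
arbitrary but fixed order. -/
def GoodSetup {F V : Type} [DecidableEq V] (R : CTRS F V) (ar mOf : F → ℕ)
    (idx : CRule F V → ℕ) : Prop :=
  (∀ ρ ∈ R, ρ.lhs.WF ar ∧ ρ.rhs.WF ar ∧ ∀ c ∈ ρ.conds, c.1.WF ar ∧ c.2.WF ar) ∧
  (∀ ρ ∈ R, ∃ (f : F) (ws : List (Term F V)), ρ.lhs = Term.app f ws) ∧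
  (∀ ρ ∈ R, ρ.conds ≠ [] →
     ∀ (f : F) (ws : List (Term F V)), ρ.lhs = Term.app f ws →
       1 ≤ idx ρ ∧ idx ρ ≤ mOf f) ∧
  (∀ ρ₁, ρ₁ ∈ R → ∀ ρ₂, ρ₂ ∈ R → ρ₁.conds ≠ [] → ρ₂.conds ≠ [] →
     ∀ (f : F) (ws₁ ws₂ : List (Term F V)),
       ρ₁.lhs = Term.app f ws₁ → ρ₂.lhs = Term.app f ws₂ →
       idx ρ₁ = idx ρ₂ → ρ₁ = ρ₂) ∧
  (∀ (f : F) (i : ℕ), 1 ≤ i → i ≤ mOf f →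
     ∃ ρ ∈ R, ρ.conds ≠ [] ∧ (∃ ws : List (Term F V), ρ.lhs = Term.app f ws) ∧ idx ρ = i)
/-- The unraveled system `U(R)` with its rules considered over the extended
variable set `WVar V` (so that it rewrites the terms in the image of `Φ`). -/
def USysW {F V : Type} [DecidableEq V] (R : CTRS F V) : CTRS (UF F V) (WVar V) :=
  { r | ∃ r' ∈ USys R, r = r'.mapV Sum.inl }

/-- Membership in the set `Φ(t)`: `PhiMem R ar mOf idx t u` states that
`u ∈ Φ(t)`, where `Φ` is the mapping (defined mutually with the auxiliary
mapping `Ψ`) from reachable terms of `T(F̄,V)` to sets of terms of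
`T(U_R(F),V)`:
* `Φ(x) = {x}` for a variable `x`;
* `Φ(⟨t⟩) = Φ(t)`;
* for an original symbol `f` applied to arguments `ts`, `Φ` contains
  `f(t'1,…,t'n)` for all `t'p ∈ Φ(tp)` of the first `ar f` arguments (this is
  the clause for constructors and the clause `Ψ(f̄(t⃗,⊥,…,⊥))` for defined
  symbols), and
* for each `i`-th extra argument of a defined symbol `f` that is a tuple
  `[⟨t'⟩, t'1,…,t'_{nj}]^ρ_j` (where `ρ` is the `i`-th conditional `f`-rule),
  `Φ` contains all terms `U^ρ_j(u', u⃗')` with `u' ∈ Φ(t')` and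
  `u⃗' ∈ Φ(σ(X⃗j))`, where `σ` is a substitution with `σ(V⃗j) = t'1,…,t'_{nj}`
  and `σ(ext(w1),…,ext(wn))` equal to the main arguments of the node. -/
inductive PhiMem {F V : Type} [DecidableEq V] (R : CTRS F V) (ar mOf : F → ℕ)
    (idx : CRule F V → ℕ) : STerm F V → Term (UF F V) (WVar V) → Prop where
  | var (x : WVar V) : PhiMem R ar mOf idx (.var x) (.var x)
  | guard {t : STerm F V} {u : Term (UF F V) (WVar V)} :
      PhiMem R ar mOf idx t u → PhiMem R ar mOf idx (guardT t) u
  | orig {f : F} {ts : List (STerm F V)} {us : List (Term (UF F V) (WVar V))} :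
      us.length = (ts.take (ar f)).length →
      (∀ p ∈ List.zip (ts.take (ar f)) us, PhiMem R ar mOf idx p.1 p.2) →
      PhiMem R ar mOf idx (.app (.orig f) ts) (.app (Sum.inl f) us)
  | cond {f : F} {ts : List (STerm F V)} {ρ : CRule F V} {ws : List (Term F V)}
      {j : ℕ} {tin : STerm F V} {vargs : List (STerm F V)}
      {σ : WVar V → STerm F V} {u : Term (UF F V) (WVar V)}
      {us : List (Term (UF F V) (WVar V))} :
      ρ ∈ R → ρ.conds ≠ [] → ρ.lhs = .app f ws →
      1 ≤ j → j ≤ ρ.conds.length →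
      (ts.drop (ar f))[idx ρ - 1]? = some (.app (.tup ρ j) (guardT tin :: vargs)) →
      (Vlist ρ j).map (fun v => σ (Sum.inl v)) = vargs →
      (extTList mOf ws 0).1.map (Term.subst σ) = ts.take (ar f) →
      PhiMem R ar mOf idx tin u →
      us.length = (Xlist ρ j).length →
      (∀ p ∈ List.zip (Xlist ρ j) us, PhiMem R ar mOf idx (σ (Sum.inl p.1)) p.2) →
      PhiMem R ar mOf idx (.app (.orig f) ts) (.app (Sum.inr (ρ, j)) (u :: us))

/-- The set `Φ(t)`. -/
def Phi {F V : Type} [DecidableEq V] (R : CTRS F V) (ar mOf : F → ℕ)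
    (idx : CRule F V → ℕ) (t : STerm F V) : Set (Term (UF F V) (WVar V)) :=
  { u | PhiMem R ar mOf idx t u }

/-- `σ' ∈ Φ(σ)`, the extension of `Φ` to substitutions:
`Dom(σ') ⊆ Dom(σ)` and `xσ' ∈ Φ(xσ)` for every `x ∈ Dom(σ)`. -/
def PhiSub {F V : Type} [DecidableEq V] (R : CTRS F V) (ar mOf : F → ℕ)
    (idx : CRule F V → ℕ) (σ : WVar V → STerm F V)
    (σ' : WVar V → Term (UF F V) (WVar V)) : Prop :=
  ∀ x : WVar V, PhiMem R ar mOf idx (σ x) (σ' x)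

/-- The relation `s ⇝ t`: for each `t' ∈ Φ(t)` there exists `s' ∈ Φ(s)` with
`s' →*_{U(R)} t'`. -/
def Leadsto {F V : Type} [DecidableEq V] (R : CTRS F V) (ar mOf : F → ℕ)
    (idx : CRule F V → ℕ) (s t : STerm F V) : Prop :=
  ∀ u, PhiMem R ar mOf idx t u →
    ∃ u', PhiMem R ar mOf idx s u' ∧ RedStar (USysW R) u' u

/-- A term of `T(F̄,V)` is reachable if it is a subterm of some term reachable
by `SR(R)` from `⟨s̄⟩` for some `s ∈ T(F,V)`. -/
def SRReachable {F V : Type} [DecidableEq V] (R : CTRS F V) (ar mOf : F → ℕ)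
    (idx : CRule F V → ℕ) (t : STerm F V) : Prop :=
  ∃ (s : Term F V) (C : Ctx (SSym F V) (WVar V)),
    s.WF ar ∧ RedStar (SRSys R ar mOf idx) (guardT (barT mOf s)) (C.fill t)

/-- The restriction `σ|_X` of a substitution to the variables of a term `t`. -/
def restrictTo {F V : Type} [DecidableEq V] (σ : WVar V → STerm F V) (t : STerm F V) :
    WVar V → STerm F V :=
  fun x => if 0 < t.count x then σ x else .var x

/-!
Write `s_{k+1}` for `r`. In `U(R)` as well as in `SR(R)`, the `j`-th rule made from `ρ` has on its
right-hand side the variables of `l, t₁, …, t_j, s_{j+1}` (only those of `r` if `j = k`). On its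
left-hand side, a lookup list `X⃗_j` or `V⃗_j` records each earlier variable once, however often it
occurred, so the number of occurrences of `x` is `|l, t₁, …, t_j|_x` as soon as
`|l, t₁, …, t_{j-1}|_x ≤ 1`. By induction on `j`, the rules made from `ρ` are then weakly
left-linear, for either transformation, iff `|l, t₁, …, t_j|_x = 1` for every `x` on the `j`-th
right-hand side. The fresh variables that `SR` introduces occur at most once in every left-hand
side and add no further condition.
-/

theorem count_dedup_eq_min {α : Type*} [DecidableEq α] (a : α) (l : List α) :
    l.dedup.count a = min 1 (l.count a) := by
  rw [List.count_dedup]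
  split_ifs with h
  · exact (min_eq_left (List.count_pos_iff.2 h)).symm
  · rw [List.count_eq_zero.2 h, Nat.min_zero]

@[elab_as_elim]
theorem Term.induction {F V : Type} {p : Term F V → Prop} (var : ∀ x, p (.var x))
    (app : ∀ f ts, (∀ t ∈ ts, p t) → p (.app f ts)) : ∀ t, p t
  | .var x => var x
  | .app f ts => app f ts fun t _ => induction var app t

section Counting

variable {F G V W : Type} [DecidableEq V] [DecidableEq W]

@[simp] theorem seqCount_nil (x : V) : seqCount x ([] : List (Term F V)) = 0 := rfl

@[simp] theorem seqCount_cons (x : V) (t : Term F V) (ts : List (Term F V)) :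
    seqCount x (t :: ts) = t.count x + seqCount x ts := rfl

@[simp] theorem seqCount_append (x : V) (ts us : List (Term F V)) :
    seqCount x (ts ++ us) = seqCount x ts + seqCount x us := by
  simp only [seqCount, List.map_append, List.sum_append]

theorem seqCount_map_congr {α : Type*} {x : V} {y : W} {f : α → Term F V} {g : α → Term G W}
    {as : List α} (h : ∀ a ∈ as, (f a).count x = (g a).count y) :
    seqCount x (as.map f) = seqCount y (as.map g) := by
  simp only [seqCount, List.map_map]
  exact congrArg List.sum (List.map_congr_left h)

theorem seqCount_map_var_of_injective {g : V → W} (hg : g.Injective) (x : V) (xs : List V) :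
    seqCount (g x) (xs.map fun v => (.var (g v) : Term F W)) = xs.count x := by
  induction xs with
  | nil => rfl
  | cons y xs ih => simp [Term.count, ih, List.count_cons, hg.eq_iff, add_comm]

theorem seqCount_map_var (x : V) (xs : List V) :
    seqCount x (xs.map (Term.var (F := F))) = xs.count x :=
  seqCount_map_var_of_injective Function.injective_id x xs

theorem seqCount_eq_zero {x : V} {ts : List (Term F V)} :
    seqCount x ts = 0 ↔ ∀ t ∈ ts, t.count x = 0 := by
  simp [seqCount, List.sum_eq_zero_iff]

theorem seqCount_set_add (x : V) (t : Term F V) :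
    ∀ (ts : List (Term F V)) (i : ℕ) (hi : i < ts.length),
      seqCount x (ts.set i t) + ts[i].count x = seqCount x ts + t.count x
  | u :: ts, 0, _ => by
    simp only [List.set_cons_zero, List.getElem_cons_zero, seqCount_cons]
    omega
  | u :: ts, i + 1, hi => by
    have ih := seqCount_set_add x t ts i (Nat.lt_of_succ_lt_succ hi)
    simp only [List.set_cons_succ, List.getElem_cons_succ, seqCount_cons]
    omega

namespace Term

@[simp] theorem count_var (x y : V) : (var y : Term F V).count x = if y = x then 1 else 0 := by
  rw [count]

@[simp] theorem count_app (x : V) (f : F) (ts : List (Term F V)) :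
    (app f ts).count x = seqCount x ts := by
  simp [count, seqCount]

@[simp] theorem count_mapF (g : F → G) (x : V) (t : Term F V) :
    (t.mapF g).count x = t.count x := by
  induction t using Term.induction with
  | var y => simp [mapF]
  | app f ts ih =>
    have h : seqCount x (ts.map (mapF g)) = seqCount x (ts.map id) := seqCount_map_congr ih
    simpa [mapF] using h

@[simp] theorem count_varList (x : V) (t : Term F V) : t.varList.count x = t.count x := by
  induction t using Term.induction with
  | var y => simp [varList, List.count_singleton]
  | app f ts ih =>
    have h : ts.map (List.count x ∘ varList) = ts.map (count x) := List.map_congr_left ih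
    simp [varList, List.count_flatMap, h, seqCount]

end Term

@[simp] theorem count_flatMap_varList (x : V) (ts : List (Term F V)) :
    (ts.flatMap Term.varList).count x = seqCount x ts := by
  simp [List.count_flatMap, Function.comp_def, seqCount]

end Counting

namespace CRule

variable {F V : Type}

/-- The patterns `t₁, …, t_j` of the first `j` conditions of a rule. -/
def condPats (ρ : CRule F V) (j : ℕ) : List (Term F V) := (ρ.conds.take j).map Prod.snd

/-- The terms whose variables the `j`-th transformed rule of `ρ` needs on its right-hand side:
`s_{j+1}, l, t₁, …, t_j` for `j < k`, and `r` for `j = k`. -/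
def neededTerms (ρ : CRule F V) (j : ℕ) : List (Term F V) :=
  if j = ρ.conds.length then [ρ.rhs]
  else (ρ.conds.getD j (dummyCond ρ)).1 :: ρ.lhs :: ρ.condPats j

/-- Stepwise weak left-linearity: `|l, t₁, …, t_j|_x = 1` for every `j ≤ k` and every variable `x`
needed after the first `j` conditions. It depends on the rule alone and is the common form of the
conditions that the two transformations impose. -/
def StepWLL [DecidableEq V] (ρ : CRule F V) : Prop :=
  ∀ j ≤ ρ.conds.length, ∀ x : V,
    0 < seqCount x (ρ.neededTerms j) → seqCount x (ρ.lhs :: ρ.condPats j) = 1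

variable [DecidableEq V] {ρ : CRule F V} {j : ℕ}

theorem wll_iff_of_conds_eq_nil (h : ρ.conds = []) :
    ρ.WLL ↔ ∀ x, 0 < ρ.rhs.count x → ρ.lhs.count x = 1 := by
  simp [WLL, srcs, pats, h]

theorem seqCount_condPats_succ (x : V) (hj : j < ρ.conds.length) :
    seqCount x (ρ.condPats (j + 1)) =
      seqCount x (ρ.condPats j) + (ρ.conds.getD j (dummyCond ρ)).2.count x := by
  rw [condPats, condPats, List.take_succ_eq_append_getElem hj, List.map_append, seqCount_append,
    List.getD_eq_getElem _ _ hj]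
  rfl

theorem seqCount_neededTerms_of_lt (x : V) (hj : j < ρ.conds.length) :
    seqCount x (ρ.neededTerms j) =
      (ρ.conds.getD j (dummyCond ρ)).1.count x + seqCount x (ρ.lhs :: ρ.condPats j) := by
  rw [neededTerms, if_neg hj.ne, seqCount_cons]

theorem stepWLL_of_conds_eq_nil (h : ρ.conds = []) :
    ρ.StepWLL ↔ ∀ x, 0 < ρ.rhs.count x → ρ.lhs.count x = 1 := by
  simp [StepWLL, neededTerms, condPats, h]

theorem stepWLL_iff_of_counts {n : ℕ → V → ℕ} (hzero : ∀ x, n 0 x = ρ.lhs.count x)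
    (hsucc : ∀ j < ρ.conds.length, ∀ x, seqCount x (ρ.lhs :: ρ.condPats j) ≤ 1 →
      n (j + 1) x = seqCount x (ρ.lhs :: ρ.condPats (j + 1))) :
    ρ.StepWLL ↔
      ∀ j ≤ ρ.conds.length, ∀ x, 0 < seqCount x (ρ.neededTerms j) → n j x = 1 := by
  have hzero' (x : V) : n 0 x = seqCount x (ρ.lhs :: ρ.condPats 0) := by simp [hzero, condPats]
  constructor
  · rintro h (_ | j) hj x hx
    · exact (hzero' x).trans (h 0 hj x hx)
    · have hone := h (j + 1) hj x hx
      have hle : seqCount x (ρ.lhs :: ρ.condPats j) ≤ 1 := by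
        rw [← hone, seqCount_cons, seqCount_cons, seqCount_condPats_succ x hj]
        omega
      exact (hsucc j hj x hle).trans hone
  · intro h j
    induction j with
    | zero => exact fun hj x hx => (hzero' x).symm.trans (h 0 hj x hx)
    | succ j ih =>
      intro hj x hx
      -- A variable that has already occurred is needed at step `j`, hence occurred exactly once.
      have hle : seqCount x (ρ.lhs :: ρ.condPats j) ≤ 1 := by
        by_contra! hlt
        refine hlt.ne' (ih (Nat.le_of_succ_le hj) x ?_)
        rw [seqCount_neededTerms_of_lt x hj]
        omega
      exact (hsucc j hj x hle).symm.trans (h (j + 1) hj x hx)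

end CRule

section Unraveling

variable {F V : Type} [DecidableEq V] (ρ : CRule F V)

theorem count_Xlist_succ (x : V) (j : ℕ) :
    (Xlist ρ (j + 1)).count x = min 1 (seqCount x (ρ.lhs :: ρ.condPats j)) := by
  simp [Xlist, CRule.condPats, count_dedup_eq_min]

theorem count_uterm_succ (x : V) (j : ℕ) (t : Term F V) :
    (uterm ρ (j + 1) t).count x = t.count x + min 1 (seqCount x (ρ.lhs :: ρ.condPats j)) := by
  rw [uterm, Term.count_app, seqCount_cons, seqCount_map_var, count_Xlist_succ, liftF,
    Term.count_mapF]

theorem count_urhs_pos_iff {x : V} {j : ℕ} (hj : j ≤ ρ.conds.length) :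
    0 < (urhs ρ j).count x ↔ 0 < seqCount x (ρ.neededTerms j) := by
  rcases hj.eq_or_lt with rfl | hlt
  · simp [urhs, CRule.neededTerms, liftF]
  · rw [urhs, if_neg hlt.ne, count_uterm_succ, CRule.seqCount_neededTerms_of_lt x hlt]
    omega

theorem count_ulhs_zero (x : V) : (ulhs ρ 0).count x = ρ.lhs.count x := by
  simp [ulhs, liftF]

theorem count_ulhs_succ {x : V} {j : ℕ} (hj : j < ρ.conds.length)
    (hle : seqCount x (ρ.lhs :: ρ.condPats j) ≤ 1) :
    (ulhs ρ (j + 1)).count x = seqCount x (ρ.lhs :: ρ.condPats (j + 1)) := by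
  rw [ulhs, if_neg j.succ_ne_zero, Nat.add_sub_cancel, count_uterm_succ, min_eq_right hle,
    seqCount_cons, seqCount_cons, CRule.seqCount_condPats_succ x hj]
  omega

theorem URules_wll_iff_stepWLL : (∀ r ∈ URules ρ, r.WLL) ↔ ρ.StepWLL := by
  have hrules : (∀ r ∈ URules ρ, r.WLL) ↔
      ∀ j ≤ ρ.conds.length, ∀ x, 0 < (urhs ρ j).count x → (ulhs ρ j).count x = 1 := by
    constructor
    · exact fun h j hj => (CRule.wll_iff_of_conds_eq_nil rfl).1 (h _ ⟨j, hj, rfl⟩)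
    · rintro h _ ⟨j, hj, rfl⟩
      exact (CRule.wll_iff_of_conds_eq_nil rfl).2 (h j hj)
  rw [hrules, CRule.stepWLL_iff_of_counts (n := fun j x => (ulhs ρ j).count x) (count_ulhs_zero ρ)
    fun _ hj _ hle => count_ulhs_succ ρ hj hle]
  exact forall₂_congr fun j hj => forall_congr' fun x => by rw [count_urhs_pos_iff ρ hj]

theorem isUWLL_iff_stepWLL (R : CTRS F V) : IsUWLL R ↔ ∀ ρ ∈ R, ρ.StepWLL := by
  simp only [IsUWLL, USys, Set.mem_iUnion₂, ← URules_wll_iff_stepWLL]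
  exact ⟨fun h ρ hρ r hr => h r ⟨ρ, hρ, hr⟩, fun h r ⟨ρ, hρ, hr⟩ => h ρ hρ r hr⟩

end Unraveling

section SRTerms

variable {F V : Type} (mOf : F → ℕ)

/-- `m` distinct fresh variables, numbered from `c` on. -/
def freshVars (c m : ℕ) : List (STerm F V) := (List.range m).map fun k => .var (Sum.inr (c + k))

/-- The term `f̄(ext(w₁), …, ext(wₙ), z₁, …, mid, …, zₘ)` with `mid` at the extra argument of
index `i`, counted from `0`. -/
def condFrame (f : F) (ws : List (Term F V)) (i : ℕ) (mid : STerm F V) : STerm F V :=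
  .app (.orig f) ((extTList mOf ws 0).1 ++ (freshVars (extTList mOf ws 0).2 (mOf f)).set i mid)

theorem map_range_ite_eq_freshVars_set (c m i : ℕ) (mid : STerm F V) :
    (List.range m).map (fun q => if q = i then mid else .var (Sum.inr (c + q))) =
      (freshVars c m).set i mid := by
  refine List.ext_getElem (by simp [freshVars]) fun q _ _ => ?_
  simp [freshVars, List.getElem_set, eq_comm]

theorem extT_app_fst (f : F) (ts : List (Term F V)) (c : ℕ) :
    (extT mOf (.app f ts) c).1 = .app (.orig f)
      ((extTList mOf ts c).1 ++ freshVars (extTList mOf ts c).2 (mOf f)) := by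
  rw [extT, freshVars]

theorem extT_app_snd (f : F) (ts : List (Term F V)) (c : ℕ) :
    (extT mOf (.app f ts) c).2 = (extTList mOf ts c).2 + mOf f := by
  rw [extT]

theorem extTList_cons_fst (t : Term F V) (ts : List (Term F V)) (c : ℕ) :
    (extTList mOf (t :: ts) c).1 =
      (extT mOf t c).1 :: (extTList mOf ts (extT mOf t c).2).1 := by
  rw [extTList]

theorem extTList_cons_snd (t : Term F V) (ts : List (Term F V)) (c : ℕ) :
    (extTList mOf (t :: ts) c).2 = (extTList mOf ts (extT mOf t c).2).2 := by
  rw [extTList]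

mutual

theorem le_extT_snd : ∀ (t : Term F V) (c : ℕ), c ≤ (extT mOf t c).2
  | .var y, c => by rw [extT]
  | .app f ts, c => by
    rw [extT_app_snd]
    exact (le_extTList_snd ts c).trans (Nat.le_add_right _ _)

theorem le_extTList_snd : ∀ (ts : List (Term F V)) (c : ℕ), c ≤ (extTList mOf ts c).2
  | [], c => by rw [extTList]
  | t :: ts, c => by
    rw [extTList_cons_snd]
    exact (le_extT_snd t c).trans (le_extTList_snd ts _)

end

variable [DecidableEq V]

@[simp] theorem count_botT (y : WVar V) : (botT : STerm F V).count y = 0 := by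
  simp [botT]

@[simp] theorem count_guardT (y : WVar V) (t : STerm F V) : (guardT t).count y = t.count y := by
  simp [guardT]

theorem seqCount_replicate_botT (y : WVar V) (m : ℕ) :
    seqCount y (List.replicate m (botT : STerm F V)) = 0 :=
  seqCount_eq_zero.2 fun _ ht => List.eq_of_mem_replicate ht ▸ count_botT y

@[simp] theorem count_inl_barT (x : V) (t : Term F V) :
    (barT mOf t).count (Sum.inl x) = t.count x := by
  induction t using Term.induction with
  | var y => simp [barT]
  | app f ts ih =>
    have h : seqCount (Sum.inl x) (ts.map (barT mOf)) = seqCount x (ts.map id) :=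
      seqCount_map_congr ih
    simpa [barT, seqCount_replicate_botT] using h

@[simp] theorem count_inr_barT (n : ℕ) (t : Term F V) : (barT mOf t).count (Sum.inr n) = 0 := by
  induction t using Term.induction with
  | var y => simp [barT]
  | app f ts ih =>
    have h : seqCount (Sum.inr n) (ts.map (barT mOf)) = 0 := by simpa [seqCount_eq_zero] using ih
    simpa [barT, seqCount_replicate_botT] using h

theorem seqCount_inl_freshVars (x : V) (c m : ℕ) :
    seqCount (Sum.inl x) (freshVars c m : List (STerm F V)) = 0 := by
  simp [freshVars, seqCount, Function.comp_def]

theorem seqCount_inr_freshVars (n c m : ℕ) :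
    seqCount (Sum.inr n) (freshVars c m : List (STerm F V)) =
      if c ≤ n ∧ n < c + m then 1 else 0 := by
  have h : (freshVars c m : List (STerm F V)) =
      (List.range' c m).map fun k => .var (Sum.inr k) := by
    simp [freshVars, List.range'_eq_map_range, Function.comp_def]
  rw [h, seqCount_map_var_of_injective Sum.inr_injective, List.count_range_1']

mutual

theorem count_inl_extT (x : V) :
    ∀ (t : Term F V) (c : ℕ), (extT mOf t c).1.count (Sum.inl x) = t.count x
  | .var y, c => by simp [extT]
  | .app f ts, c => by
    rw [extT_app_fst, Term.count_app, Term.count_app, seqCount_append, seqCount_inl_freshVars,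
      seqCount_inl_extTList x ts c, add_zero]

theorem seqCount_inl_extTList (x : V) :
    ∀ (ts : List (Term F V)) (c : ℕ),
      seqCount (Sum.inl x) (extTList mOf ts c).1 = seqCount x ts
  | [], _ => by simp [extTList]
  | t :: ts, c => by
    rw [extTList_cons_fst, seqCount_cons, seqCount_cons, count_inl_extT x t,
      seqCount_inl_extTList x ts]

end

mutual

theorem count_inr_extT (n : ℕ) :
    ∀ (t : Term F V) (c : ℕ),
      (extT mOf t c).1.count (Sum.inr n) = if c ≤ n ∧ n < (extT mOf t c).2 then 1 else 0
  | .var y, c => by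
    rw [extT, Term.count_var, if_neg Sum.inl_ne_inr, if_neg fun h => h.1.not_gt h.2]
  | .app f ts, c => by
    have hle := le_extTList_snd mOf ts c
    rw [extT_app_fst, extT_app_snd, Term.count_app, seqCount_append, seqCount_inr_freshVars,
      seqCount_inr_extTList n ts c]
    split_ifs <;> omega

theorem seqCount_inr_extTList (n : ℕ) :
    ∀ (ts : List (Term F V)) (c : ℕ), seqCount (Sum.inr n) (extTList mOf ts c).1 =
      if c ≤ n ∧ n < (extTList mOf ts c).2 then 1 else 0
  | [], c => by
    rw [extTList, seqCount_nil, if_neg fun h => h.1.not_gt h.2]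
  | t :: ts, c => by
    have hle := le_extT_snd mOf t c
    have hle' := le_extTList_snd mOf ts (extT mOf t c).2
    rw [extTList_cons_fst, extTList_cons_snd, seqCount_cons, count_inr_extT n t c,
      seqCount_inr_extTList n ts]
    split_ifs <;> omega

end

-- The fresh variable replaced by `mid` is counted on the left, so that no subtraction occurs.
theorem count_condFrame_add {f : F} {i : ℕ} (hi : i < mOf f) (y : WVar V) (ws : List (Term F V))
    (mid : STerm F V) :
    (condFrame mOf f ws i mid).count y +
        (Term.var (Sum.inr ((extTList mOf ws 0).2 + i)) : STerm F V).count y =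
      seqCount y (extTList mOf ws 0).1 +
        seqCount y (freshVars (extTList mOf ws 0).2 (mOf f) : List (STerm F V)) + mid.count y := by
  have hi' : i < (freshVars (F := F) (V := V) (extTList mOf ws 0).2 (mOf f)).length := by
    simpa [freshVars] using hi
  have hset := seqCount_set_add y mid _ i hi'
  rw [condFrame, Term.count_app, seqCount_append, add_assoc, add_assoc, ← hset]
  simp [freshVars]

theorem count_inl_condFrame {f : F} {i : ℕ} (hi : i < mOf f) (x : V) (ws : List (Term F V))
    (mid : STerm F V) :
    (condFrame mOf f ws i mid).count (Sum.inl x) = seqCount x ws + mid.count (Sum.inl x) := by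
  simpa [seqCount_inl_extTList, seqCount_inl_freshVars] using
    count_condFrame_add mOf hi (Sum.inl x) ws mid

theorem count_inr_condFrame {f : F} {i : ℕ} (hi : i < mOf f) (n : ℕ) (ws : List (Term F V))
    (mid : STerm F V) :
    (condFrame mOf f ws i mid).count (Sum.inr n) =
      (if n < (extTList mOf ws 0).2 + mOf f ∧ n ≠ (extTList mOf ws 0).2 + i then 1 else 0) +
        mid.count (Sum.inr n) := by
  have hadd := count_condFrame_add mOf hi (Sum.inr n) ws mid
  rw [seqCount_inr_extTList, seqCount_inr_freshVars, Term.count_var] at hadd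
  simp only [Sum.inr.injEq] at hadd
  split_ifs at hadd ⊢ <;> omega

variable (ρ : CRule F V)

theorem count_Vlist_succ (x : V) (j : ℕ) :
    (Vlist ρ (j + 1)).count x = min 1 (seqCount x (ρ.condPats j)) := by
  simp [Vlist, CRule.condPats, count_dedup_eq_min]

theorem count_inl_tupT_succ (x : V) (j : ℕ) (t : STerm F V) :
    (tupT ρ (j + 1) t).count (Sum.inl x) =
      t.count (Sum.inl x) + min 1 (seqCount x (ρ.condPats j)) := by
  rw [tupT, Term.count_app, seqCount_cons, count_guardT,
    seqCount_map_var_of_injective Sum.inl_injective, count_Vlist_succ]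

theorem count_inr_tupT (n j : ℕ) (t : STerm F V) :
    (tupT ρ j t).count (Sum.inr n) = t.count (Sum.inr n) := by
  simp [tupT, seqCount_eq_zero]

end SRTerms

section SRRules

variable {F V : Type} [DecidableEq V] (mOf : F → ℕ) (idx : CRule F V → ℕ) (ρ : CRule F V)

theorem condSRRule_conds (j : ℕ) : (condSRRule mOf idx ρ j).conds = [] := by
  unfold condSRRule
  split <;> rfl

theorem condSRRule_rhs_length {f : F} {ws : List (Term F V)} (hl : ρ.lhs = .app f ws) :
    (condSRRule mOf idx ρ ρ.conds.length).rhs = guardT (barT mOf ρ.rhs) := by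
  simp [condSRRule, hl]

variable {ρ} {f : F} {ws : List (Term F V)} {j : ℕ}

theorem condSRRule_lhs_zero (hl : ρ.lhs = .app f ws) :
    (condSRRule mOf idx ρ 0).lhs = condFrame mOf f ws (idx ρ - 1) botT := by
  simp only [condSRRule, hl, condFrame, ← map_range_ite_eq_freshVars_set, if_true]

theorem condSRRule_lhs_succ (hl : ρ.lhs = .app f ws) :
    (condSRRule mOf idx ρ (j + 1)).lhs = condFrame mOf f ws (idx ρ - 1)
      (tupT ρ (j + 1) (extT mOf (ρ.conds.getD j (dummyCond ρ)).2
        ((extTList mOf ws 0).2 + mOf f)).1) := by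
  simp only [condSRRule, hl, condFrame, ← map_range_ite_eq_freshVars_set, j.succ_ne_zero, if_false,
    Nat.add_sub_cancel]

theorem condSRRule_rhs_of_lt (hl : ρ.lhs = .app f ws) (hj : j < ρ.conds.length) :
    (condSRRule mOf idx ρ j).rhs = condFrame mOf f ws (idx ρ - 1)
      (tupT ρ (j + 1) (barT mOf (ρ.conds.getD j (dummyCond ρ)).1)) := by
  simp only [condSRRule, hl, condFrame, ← map_range_ite_eq_freshVars_set, hj.ne, if_false]

theorem count_inl_condSRRule_lhs_zero (hl : ρ.lhs = .app f ws) (hi : idx ρ - 1 < mOf f) (x : V) :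
    (condSRRule mOf idx ρ 0).lhs.count (Sum.inl x) = ρ.lhs.count x := by
  rw [condSRRule_lhs_zero mOf idx hl, count_inl_condFrame mOf hi, hl, count_botT, Term.count_app,
    add_zero]

theorem count_inl_condSRRule_lhs_succ (hl : ρ.lhs = .app f ws) (hi : idx ρ - 1 < mOf f)
    (hj : j < ρ.conds.length) {x : V} (hle : seqCount x (ρ.lhs :: ρ.condPats j) ≤ 1) :
    (condSRRule mOf idx ρ (j + 1)).lhs.count (Sum.inl x) =
      seqCount x (ρ.lhs :: ρ.condPats (j + 1)) := by
  rw [seqCount_cons] at hle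
  have hlhs : ρ.lhs.count x = seqCount x ws := by rw [hl, Term.count_app]
  rw [condSRRule_lhs_succ mOf idx hl, count_inl_condFrame mOf hi, count_inl_tupT_succ,
    count_inl_extT, seqCount_cons, CRule.seqCount_condPats_succ x hj]
  omega

theorem count_inl_condSRRule_rhs_pos_iff (hl : ρ.lhs = .app f ws) (hi : idx ρ - 1 < mOf f)
    (hj : j ≤ ρ.conds.length) {x : V} :
    0 < (condSRRule mOf idx ρ j).rhs.count (Sum.inl x) ↔ 0 < seqCount x (ρ.neededTerms j) := by
  rcases hj.eq_or_lt with rfl | hlt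
  · simp [condSRRule_rhs_length mOf idx ρ hl, CRule.neededTerms]
  · have hlhs : ρ.lhs.count x = seqCount x ws := by rw [hl, Term.count_app]
    rw [condSRRule_rhs_of_lt mOf idx hl hlt, count_inl_condFrame mOf hi, count_inl_tupT_succ,
      count_inl_barT, CRule.seqCount_neededTerms_of_lt x hlt, seqCount_cons]
    omega

theorem count_inr_condSRRule_lhs_eq_one (hl : ρ.lhs = .app f ws) (hi : idx ρ - 1 < mOf f)
    (hj : j ≤ ρ.conds.length) {n : ℕ} (hn : 0 < (condSRRule mOf idx ρ j).rhs.count (Sum.inr n)) :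
    (condSRRule mOf idx ρ j).lhs.count (Sum.inr n) = 1 := by
  have hlt : j < ρ.conds.length := by
    refine hj.lt_of_ne ?_
    rintro rfl
    simp [condSRRule_rhs_length mOf idx ρ hl] at hn
  rw [condSRRule_rhs_of_lt mOf idx hl hlt, count_inr_condFrame mOf hi, count_inr_tupT,
    count_inr_barT, add_zero] at hn
  cases j with
  | zero =>
    rw [condSRRule_lhs_zero mOf idx hl, count_inr_condFrame mOf hi, count_botT]
    split_ifs at hn ⊢ <;> omega
  | succ j =>
    rw [condSRRule_lhs_succ mOf idx hl, count_inr_condFrame mOf hi, count_inr_tupT, count_inr_extT]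
    split_ifs at hn ⊢ <;> omega

theorem condSRRules_wll_iff_stepWLL (hl : ρ.lhs = .app f ws) (hi : idx ρ - 1 < mOf f) :
    (∀ j ≤ ρ.conds.length, (condSRRule mOf idx ρ j).WLL) ↔ ρ.StepWLL := by
  rw [CRule.stepWLL_iff_of_counts
    (n := fun j x => (condSRRule mOf idx ρ j).lhs.count (Sum.inl x))
    (count_inl_condSRRule_lhs_zero mOf idx hl hi)
    fun _ hj _ hle => count_inl_condSRRule_lhs_succ mOf idx hl hi hj hle]
  refine forall₂_congr fun j hj => ?_
  rw [CRule.wll_iff_of_conds_eq_nil (condSRRule_conds mOf idx ρ j), Sum.forall,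
    and_iff_left fun _ => count_inr_condSRRule_lhs_eq_one mOf idx hl hi hj]
  exact forall_congr' fun x => by rw [count_inl_condSRRule_rhs_pos_iff mOf idx hl hi hj]

theorem uncondSRRule_wll_iff_stepWLL (h : ρ.conds = []) :
    (uncondSRRule mOf ρ).WLL ↔ ρ.StepWLL := by
  rw [CRule.wll_iff_of_conds_eq_nil rfl, CRule.stepWLL_of_conds_eq_nil h, Sum.forall]
  simp [uncondSRRule, count_inl_extT]

theorem auxGuard_wll : (auxGuard : CRule (SSym F V) (WVar V)).WLL := by
  rw [CRule.wll_iff_of_conds_eq_nil rfl]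
  intro y
  simp only [auxGuard, count_guardT, Term.count_var]
  split_ifs <;> simp

theorem auxShift_wll (ar : F → ℕ) (f : F) (i : ℕ) :
    (auxShift ar mOf f i : CRule (SSym F V) (WVar V)).WLL := by
  rw [CRule.wll_iff_of_conds_eq_nil rfl]
  have hargs (y : WVar V) : seqCount y ((List.range (ar f)).map fun q =>
      if q = i then guardT (.var (Sum.inr q)) else (.var (Sum.inr q) : STerm F V)) =
      seqCount y (freshVars 0 (ar f) : List (STerm F V)) :=
    seqCount_map_congr fun q _ => by split_ifs <;> simp
  have hfresh : (List.range (ar f)).map (fun q => (.var (Sum.inr q) : STerm F V)) =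
      freshVars 0 (ar f) := by simp [freshVars]
  have hextra : (List.range (mOf f)).map (fun q => (.var (Sum.inr (ar f + q)) : STerm F V)) =
      freshVars (ar f) (mOf f) := rfl
  intro y
  simp only [auxShift, count_guardT, Term.count_app, seqCount_append, hargs, hfresh,
    hextra, seqCount_replicate_botT, add_zero]
  rcases y with x | n
  · simp [seqCount_inl_freshVars]
  · rw [seqCount_inr_freshVars, seqCount_inr_freshVars]
    split_ifs <;> omega

theorem SRSys_wll_iff_stepWLL {R : CTRS F V} {ar : F → ℕ} (hS : GoodSetup R ar mOf idx) :
    (∀ r ∈ SRSys R ar mOf idx, r.WLL) ↔ ∀ ρ ∈ R, ρ.StepWLL := by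
  obtain ⟨-, hlhs, hidx, -, -⟩ := hS
  have hcond : ∀ ρ ∈ R, ρ.conds ≠ [] →
      ((∀ j ≤ ρ.conds.length, (condSRRule mOf idx ρ j).WLL) ↔ ρ.StepWLL) := by
    intro ρ hρ hc
    obtain ⟨f, ws, hl⟩ := hlhs ρ hρ
    obtain ⟨hpos, hle⟩ := hidx ρ hρ hc f ws hl
    exact condSRRules_wll_iff_stepWLL mOf idx hl (Nat.sub_one_lt_of_le hpos hle)
  constructor
  · intro h ρ hρ
    by_cases hc : ρ.conds = []
    · exact (uncondSRRule_wll_iff_stepWLL mOf hc).1 (h _ (.inl ⟨ρ, hρ, hc, rfl⟩))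
    · exact (hcond ρ hρ hc).1 fun j hj => h _ (.inr (.inl ⟨ρ, hρ, hc, j, hj, rfl⟩))
  · rintro h r (⟨ρ, hρ, hc, rfl⟩ | ⟨ρ, hρ, hc, j, hj, rfl⟩ | rfl | ⟨f, i, -, rfl⟩)
    · exact (uncondSRRule_wll_iff_stepWLL mOf hc).2 (h ρ hρ)
    · exact (hcond ρ hρ hc).2 (h ρ hρ) j hj
    · exact auxGuard_wll
    · exact auxShift_wll mOf ar f i

end SRRules

theorem UWLL_iff_SR_WLL_general {F V : Type} [DecidableEq V]
    (R : CTRS F V) (ar mOf : F → ℕ) (idx : CRule F V → ℕ) (hS : GoodSetup R ar mOf idx) :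
    IsUWLL R ↔ (∀ r ∈ SRSys R ar mOf idx, r.WLL) :=
  (isUWLL_iff_stepWLL R).trans (SRSys_wll_iff_stepWLL mOf idx hS).symm

/-- **`R` is `U`-WLL iff `SR(R)` is WLL.** -/
theorem UWLL_iff_SR_WLL {F V : Type} [DecidableEq V]
    (R : CTRS F V) (ar mOf : F → ℕ) (idx : CRule F V → ℕ)
    (hS : GoodSetup R ar mOf idx) (hD : IsDCTRS R) :
    IsUWLL R ↔ (∀ r ∈ SRSys R ar mOf idx, r.WLL) :=
  UWLL_iff_SR_WLL_general R ar mOf idx hS
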